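/- arXiv:2308.15732 — 2 statements merged into one kernel-verified Lean document; each statement's English description precedes it below -/
import Mathlib

section
/- (Exponential bound on the destabilizing effect of the spoofed mode of the average dynamics.) Let n ≥ 1, let J : ℝⁿ → ℝ be differentiable with a global minimizer x* ∈ ℝⁿ, and suppose ∇J is L_J-Lipschitz for some L_J > 0. Let P : ℝⁿ → ℝ^{n×n} be continuous with operator norm ‖P(x)‖ ≤ M_P for all x ∈ ℝⁿ, for some M_P > 0. Let T > 0 and let x : [0, T] → ℝⁿ be differentiable with x′(t) = P(x(t))∇J(x(t)) for all t ∈ [0, T]. Then J(x(t)) − J(x*) ≤ e^{2 M_P L_J t} (J(x(0)) − J(x*)) for all t ∈ [0, T]. -/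
/-!
Minimizing the quadratic upper bound of the descent lemma along the gradient direction shows that
`‖∇J‖² ≤ 2 L (J - inf J)`. Along a solution of `x' = P(x) ∇J(x)` the suboptimality therefore grows
at rate `⟪∇J, P ∇J⟫ ≤ M ‖∇J‖² ≤ 2 M L (J - inf J)`, and Grönwall's inequality concludes.
-/

open Set
open scoped Gradient NNReal RealInnerProductSpace

theorem le_mul_exp_of_deriv_right_le_mul {f f' : ℝ → ℝ} {K a b : ℝ}
    (hf : ContinuousOn f (Icc a b))
    (hf' : ∀ t ∈ Ico a b, HasDerivWithinAt f (f' t) (Ici t) t)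
    (bound : ∀ t ∈ Ico a b, f' t ≤ K * f t) :
    ∀ t ∈ Icc a b, f t ≤ f a * Real.exp (K * (t - a)) := by
  intro t ht
  rw [← gronwallBound_ε0]
  exact le_gronwallBound_of_liminf_deriv_right_le hf
    (fun s hs _ hr ↦ (hf' s hs).liminf_right_slope_le hr) le_rfl (by simpa using bound) t ht

theorem real_inner_apply_self_le_opNorm_mul_norm_sq {E : Type*} [SeminormedAddCommGroup E]
    [InnerProductSpace ℝ E] (A : E →L[ℝ] E) (v : E) : ⟪v, A v⟫ ≤ ‖A‖ * ‖v‖ ^ 2 :=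
  calc
    ⟪v, A v⟫ ≤ ‖v‖ * ‖A v‖ := real_inner_le_norm v (A v)
    _ ≤ ‖v‖ * (‖A‖ * ‖v‖) := by gcongr; exact A.le_opNorm v
    _ = ‖A‖ * ‖v‖ ^ 2 := by ring

section Gradient

variable {E : Type*} [NormedAddCommGroup E] [InnerProductSpace ℝ E] [CompleteSpace E]
  {J : E → ℝ} {L : ℝ≥0}

theorem hasDerivWithinAt_comp_inner_gradient {x : ℝ → E} {v : E} {s : Set ℝ} {t : ℝ}
    (hJ : DifferentiableAt ℝ J (x t)) (hx : HasDerivWithinAt x v s t) :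
    HasDerivWithinAt (fun r ↦ J (x r)) ⟪∇ J (x t), v⟫ s t := by
  rw [inner_gradient_left]
  exact hJ.hasFDerivAt.comp_hasDerivWithinAt t hx

theorem inner_gradient_add_smul_le (hL : LipschitzWith L (∇ J)) (x v : E) {s : ℝ} (hs : 0 ≤ s) :
    ⟪∇ J (x + s • v), v⟫ ≤ ⟪∇ J x, v⟫ + L * ‖v‖ ^ 2 * s := by
  have hdiff : ⟪∇ J (x + s • v) - ∇ J x, v⟫ ≤ L * ‖v‖ ^ 2 * s :=
    calc
      ⟪∇ J (x + s • v) - ∇ J x, v⟫ ≤ ‖∇ J (x + s • v) - ∇ J x‖ * ‖v‖ := real_inner_le_norm _ _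
      _ ≤ L * ‖x + s • v - x‖ * ‖v‖ := by gcongr; exact hL.norm_sub_le _ _
      _ = L * ‖v‖ ^ 2 * s := by
        rw [add_sub_cancel_left, norm_smul, Real.norm_of_nonneg hs]
        ring
  rw [inner_sub_left] at hdiff
  linarith

theorem apply_add_le_inner_gradient_add_norm_sq (hJ : Differentiable ℝ J)
    (hL : LipschitzWith L (∇ J)) (x v : E) :
    J (x + v) ≤ J x + ⟪∇ J x, v⟫ + L / 2 * ‖v‖ ^ 2 := by
  have hJderiv (s : ℝ) :
      HasDerivAt (fun s : ℝ ↦ J (x + s • v)) ⟪∇ J (x + s • v), v⟫ s := by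
    have hline : HasDerivAt (fun s : ℝ ↦ x + s • v) v s := by
      simpa using ((hasDerivAt_id s).smul_const v).const_add x
    simpa using hasDerivWithinAt_comp_inner_gradient (hJ _) (hline.hasDerivWithinAt (s := univ))
  have hquad (s : ℝ) :
      HasDerivAt (fun s : ℝ ↦ J x + (⟪∇ J x, v⟫ * s + L / 2 * ‖v‖ ^ 2 * s ^ 2))
        (⟪∇ J x, v⟫ + L * ‖v‖ ^ 2 * s) s := by
    refine ((((hasDerivAt_id s).const_mul ⟪∇ J x, v⟫).add
      ((hasDerivAt_pow 2 s).const_mul (L / 2 * ‖v‖ ^ 2))).const_add (J x)).congr_deriv ?_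
    push_cast
    ring
  have hle := image_le_of_deriv_right_le_deriv_boundary (a := 0) (b := 1)
    (fun s _ ↦ (hJderiv s).continuousAt.continuousWithinAt)
    (fun s _ ↦ (hJderiv s).hasDerivWithinAt) (by simp)
    (fun s _ ↦ (hquad s).continuousAt.continuousWithinAt)
    (fun s _ ↦ (hquad s).hasDerivWithinAt)
    (fun s hs ↦ inner_gradient_add_smul_le hL x v hs.1) (right_mem_Icc.2 zero_le_one)
  simpa [add_assoc] using hle

theorem norm_gradient_sq_le_two_mul_sub {m : ℝ} (hJ : Differentiable ℝ J)
    (hL : LipschitzWith L (∇ J)) (hm : ∀ y, m ≤ J y) (x : E) : ‖∇ J x‖ ^ 2 ≤ 2 * L * (J x - m) := by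
  have hgap : 0 ≤ J x - m := sub_nonneg.2 (hm x)
  rcases (sq_nonneg ‖∇ J x‖).eq_or_lt with hzero | hpos
  · rw [← hzero]
    positivity
  have hquad (s : ℝ) :
      0 ≤ L / 2 * ‖∇ J x‖ ^ 2 * (s * s) + ‖∇ J x‖ ^ 2 * s + (J x - m) := by
    have hstep := (hm _).trans (apply_add_le_inner_gradient_add_norm_sq hJ hL x (s • ∇ J x))
    rw [real_inner_smul_right, real_inner_self_eq_norm_sq, norm_smul, mul_pow, Real.norm_eq_abs,
      sq_abs] at hstep
    linarith
  -- The discriminant covers `L = 0`, which the optimal step `s = -1 / L` would exclude.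
  have hdiscrim := discrim_le_zero hquad
  rw [discrim] at hdiscrim
  refine le_of_mul_le_mul_right ?_ hpos
  linarith

theorem inner_gradient_apply_gradient_le {m M : ℝ} (hJ : Differentiable ℝ J)
    (hL : LipschitzWith L (∇ J)) (hm : ∀ y, m ≤ J y) {A : E →L[ℝ] E} (hA : ‖A‖ ≤ M) (x : E) :
    ⟪∇ J x, A (∇ J x)⟫ ≤ 2 * M * L * (J x - m) := by
  have hM : 0 ≤ M := (norm_nonneg A).trans hA
  calc
    ⟪∇ J x, A (∇ J x)⟫ ≤ ‖A‖ * ‖∇ J x‖ ^ 2 := real_inner_apply_self_le_opNorm_mul_norm_sq A _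
    _ ≤ M * (2 * L * (J x - m)) := by gcongr; exact norm_gradient_sq_le_two_mul_sub hJ hL hm x
    _ = 2 * M * L * (J x - m) := by ring

theorem stmt12_general {m M T : ℝ} (hJ : Differentiable ℝ J) (hL : LipschitzWith L (∇ J))
    (hm : ∀ y, m ≤ J y) {P : E → E →L[ℝ] E} (hP : ∀ y, ‖P y‖ ≤ M) {x : ℝ → E}
    (hx : ∀ t ∈ Icc 0 T, HasDerivWithinAt x (P (x t) (∇ J (x t))) (Icc 0 T) t) :
    ∀ t ∈ Icc 0 T, J (x t) - m ≤ Real.exp (2 * M * L * t) * (J (x 0) - m) := by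
  intro t ht
  have hgap (s : ℝ) (hs : s ∈ Icc 0 T) : HasDerivWithinAt (fun r ↦ J (x r) - m)
      ⟪∇ J (x s), P (x s) (∇ J (x s))⟫ (Icc 0 T) s :=
    (hasDerivWithinAt_comp_inner_gradient (hJ (x s)) (hx s hs)).sub_const m
  have hgronwall := le_mul_exp_of_deriv_right_le_mul
    (fun s hs ↦ (hgap s hs).continuousWithinAt)
    (fun s hs ↦ (hgap s (Ico_subset_Icc_self hs)).mono_of_mem_nhdsWithin
      (Icc_mem_nhdsGE_of_mem hs))
    (fun s _ ↦ inner_gradient_apply_gradient_le hJ hL hm (hP (x s)) (x s)) t ht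
  rwa [sub_zero, mul_comm] at hgronwall

end Gradient

/-- Exponential bound on the destabilizing effect of the spoofed mode of the average
dynamics: along solutions of `x′ = +P(x)∇J(x)` with `∇J` `L_J`-Lipschitz, `x*` a
global minimizer, and `‖P(x)‖ ≤ M_P`, the suboptimality grows at most like
`e^{2 M_P L_J t}`. -/
theorem stmt12 (n : ℕ) (hn : 1 ≤ n) (LJ MP : ℝ) (hLJ : 0 < LJ) (hMP : 0 < MP)
    (J : EuclideanSpace ℝ (Fin n) → ℝ)
    (hJdiff : ∀ x, DifferentiableAt ℝ J x)
    (hJlip : ∀ x y, ‖gradient J x - gradient J y‖ ≤ LJ * ‖x - y‖)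
    (xs : EuclideanSpace ℝ (Fin n)) (hxs : ∀ x, J xs ≤ J x)
    (P : EuclideanSpace ℝ (Fin n) →
      EuclideanSpace ℝ (Fin n) →L[ℝ] EuclideanSpace ℝ (Fin n))
    (hPcont : Continuous P)
    (hPnorm : ∀ x, ‖P x‖ ≤ MP)
    (T : ℝ) (hT : 0 < T)
    (x : ℝ → EuclideanSpace ℝ (Fin n))
    (hx : ∀ t ∈ Set.Icc (0:ℝ) T,
      HasDerivAt x (P (x t) (gradient J (x t))) t) :
    ∀ t ∈ Set.Icc (0:ℝ) T,
      J (x t) - J xs ≤ Real.exp (2 * MP * LJ * t) * (J (x 0) - J xs) := by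
  exact stmt12_general (L := ⟨LJ, hLJ.le⟩) hJdiff (lipschitzWith_iff_norm_sub_le.2 hJlip) hxs hPnorm
    fun t ht ↦ (hx t ht).hasDerivWithinAt
end

section
/- (Second-order average of the model-free synchronization dynamics is the Kuramoto vector field, equation (45).) Let r ≥ 2, T₂ > 0, and let w₁, …, w_r be pairwise distinct positive reals with w_i T₂ ∈ 2π·ℤ_{>0} for every i. Let α₁, …, α_r ∈ {−1, +1}, and for each i let 𝒩_i ⊆ {1, …, r} \ {i}. Define J_i(ξ) := Σ_{j∈𝒩_i} (1 − cos(ξ_i − ξ_j)) for ξ ∈ ℝ^r, define φ₁ : ℝ^r × ℝ → ℝ^r componentwise by (φ₁)_i(ξ, τ₂) := α_i √(2w_i) cos(w_i τ₂ + J_i(ξ)), and u₁(ξ, τ₂) := ∫₀^{τ₂} φ₁(ξ, s) ds. Then for every ξ ∈ ℝ^r and every i ∈ {1, …, r}, the i-th component of (1/T₂) ∫₀^{T₂} (1/2)[u₁, φ₁]_ξ(ξ, τ₂) dτ₂ equals −Σ_{j∈𝒩_i} sin(ξ_i − ξ_j); equivalently, the second-order average of the closed-loop dynamics ξ̇_i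 = 1 + α_i (φ₁)_i(ξ, t/ε²)/ε is ξ̄̇_i = 1 − Σ_{j∈𝒩_i} sin(ξ̄_i − ξ̄_j), independently of the unknown control directions α_i. -/
open MeasureTheory

/-!
Each component of `[u, φ]` is linear in `u` and `φ`: at a fixed state,
`[u, φ]ᵢ = cᵢ dJᵢ (g' • u - g • φ)` with `g = (cos (wᵢ t + Jᵢ) - cos Jᵢ) / wᵢ`. Since `φ = u'` and
`u` vanishes at both ends of the period, integrating by parts turns the integral into
`-2 cᵢ dJᵢ (∫ g • φ)`, and orthogonality of the cosines leaves only the `i`-th coordinate of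
`∫ g • φ`. So the average is `-(cᵢ² / (2 wᵢ)) ∂ᵢJᵢ` for every differentiable cost `J`; the
amplitudes `αᵢ √(2 wᵢ)` normalise the factor to one, whatever the sign of `αᵢ`.
-/

open Real VectorField

section PeriodIntegrals

variable {a b p q T : ℝ}

lemma integral_cos_mul_add (ha : a ≠ 0) (p t : ℝ) :
    ∫ s in (0 : ℝ)..t, cos (a * s + p) = (sin (a * t + p) - sin p) / a := by
  rw [intervalIntegral.integral_comp_mul_add _ ha, integral_cos, mul_zero, zero_add, smul_eq_mul,
    inv_mul_eq_div]

lemma integral_cos_mul_add_eq_zero (ha : a ≠ 0) (haT : ∃ n : ℤ, a * T = n * (2 * π)) :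
    ∫ s in (0 : ℝ)..T, cos (a * s + p) = 0 := by
  obtain ⟨n, hn⟩ := haT
  rw [integral_cos_mul_add ha, hn, add_comm, sin_add_int_mul_two_pi, sub_self, zero_div]

lemma integral_cos_mul_cos :
    ∫ s in (0 : ℝ)..T, cos (a * s + p) * cos (b * s + q) =
      ((∫ s in (0 : ℝ)..T, cos ((a - b) * s + (p - q))) +
        ∫ s in (0 : ℝ)..T, cos ((a + b) * s + (p + q))) / 2 := by
  rw [← intervalIntegral.integral_add (Continuous.intervalIntegrable (by fun_prop) _ _)
    (Continuous.intervalIntegrable (by fun_prop) _ _), ← intervalIntegral.integral_div]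
  refine intervalIntegral.integral_congr fun s _ => ?_
  have product_to_sum := two_mul_cos_mul_cos (a * s + p) (b * s + q)
  rw [show a * s + p - (b * s + q) = (a - b) * s + (p - q) by ring,
    show a * s + p + (b * s + q) = (a + b) * s + (p + q) by ring] at product_to_sum
  linear_combination product_to_sum / 2

lemma integral_cos_mul_cos_eq_zero (hab : |a| ≠ |b|) (haT : ∃ n : ℤ, a * T = n * (2 * π))
    (hbT : ∃ n : ℤ, b * T = n * (2 * π)) :
    ∫ s in (0 : ℝ)..T, cos (a * s + p) * cos (b * s + q) = 0 := by
  obtain ⟨m, hm⟩ := haT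
  obtain ⟨n, hn⟩ := hbT
  rw [ne_eq, abs_eq_abs, not_or, ← sub_eq_zero, ← add_eq_zero_iff_eq_neg] at hab
  rw [integral_cos_mul_cos,
    integral_cos_mul_add_eq_zero hab.1 ⟨m - n, by push_cast; linear_combination hm - hn⟩,
    integral_cos_mul_add_eq_zero hab.2 ⟨m + n, by push_cast; linear_combination hm + hn⟩,
    add_zero, zero_div]

lemma integral_cos_mul_cos_self (ha : a ≠ 0) (haT : ∃ n : ℤ, a * T = n * (2 * π)) :
    ∫ s in (0 : ℝ)..T, cos (a * s + p) * cos (a * s + p) = T / 2 := by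
  obtain ⟨n, hn⟩ := haT
  rw [integral_cos_mul_cos, integral_cos_mul_add_eq_zero (a := a + a) (by simpa using ha)
    ⟨2 * n, by push_cast; linear_combination 2 * hn⟩]
  simp

end PeriodIntegrals

lemma integral_deriv_mul_sub_mul_deriv_of_eq_zero {A : Type*} [NormedRing A] [NormedAlgebra ℝ A]
    [CompleteSpace A] {f f' g g' : ℝ → A} {a b : ℝ}
    (hf : ∀ x, HasDerivAt f (f' x) x) (hg : ∀ x, HasDerivAt g (g' x) x)
    (hf' : Continuous f') (hg' : Continuous g') (hga : g a = 0) (hgb : g b = 0) :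
    ∫ x in a..b, (f' x * g x - f x * g' x) = -2 * ∫ x in a..b, f x * g' x := by
  have hf_cont : Continuous f := continuous_iff_continuousAt.2 fun x => (hf x).continuousAt
  have hg_cont : Continuous g := continuous_iff_continuousAt.2 fun x => (hg x).continuousAt
  have by_parts := intervalIntegral.integral_mul_deriv_eq_deriv_mul
    (fun x _ => hf x) (fun x _ => hg x) (hf'.intervalIntegrable a b) (hg'.intervalIntegrable a b)
  rw [hga, hgb, mul_zero, mul_zero, sub_zero, zero_sub] at by_parts
  rw [intervalIntegral.integral_sub (Continuous.intervalIntegrable (by fun_prop) _ _)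
    (Continuous.intervalIntegrable (by fun_prop) _ _), by_parts]
  noncomm_ring

lemma hasDerivAt_mul_add {𝕜 : Type*} [NontriviallyNormedField 𝕜] (a b t : 𝕜) :
    HasDerivAt (fun s => a * s + b) a t := by
  simpa using ((hasDerivAt_id t).const_mul a).add_const b

section EuclideanSpace

variable {𝕜 ι : Type*} [RCLike 𝕜] [Fintype ι]

lemma intervalIntegral_euclidean_apply {f : ℝ → EuclideanSpace 𝕜 ι} {a b : ℝ}
    (hf : IntervalIntegrable f volume a b) (i : ι) :
    (∫ t in a..b, f t) i = ∫ t in a..b, f t i :=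
  ((EuclideanSpace.proj i : EuclideanSpace 𝕜 ι →L[𝕜] 𝕜).intervalIntegral_comp_comm hf).symm

lemma fderiv_euclidean_apply {E : Type*} [NormedAddCommGroup E] [NormedSpace 𝕜 E]
    {f : E → EuclideanSpace 𝕜 ι} {x : E} (hf : DifferentiableAt 𝕜 f x) (v : E) (i : ι) :
    fderiv 𝕜 f x v i = fderiv 𝕜 (fun y => f y i) x v := by
  have coordinate := (EuclideanSpace.proj i : EuclideanSpace 𝕜 ι →L[𝕜] 𝕜).hasFDerivAt.comp x
    hf.hasFDerivAt
  exact (congrArg (· v) coordinate.fderiv).symm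

end EuclideanSpace

section Sinusoid

variable {ι : Type*}

/-- The vector of cosine waves with amplitudes `c`, frequencies `w` and phases `p`; the field `φ₁`
is obtained by letting the phases depend on the state. -/
noncomputable def sinusoid (c w p : ι → ℝ) (t : ℝ) : EuclideanSpace ℝ ι :=
  WithLp.toLp 2 fun i => c i * cos (w i * t + p i)

/-- The primitive of `sinusoid c w p` vanishing at time `0`, in closed form; the division requires
nonzero frequencies. -/
noncomputable def sinusoidPrimitive (c w p : ι → ℝ) (t : ℝ) : EuclideanSpace ℝ ι :=
  WithLp.toLp 2 fun i => c i * ((sin (w i * t + p i) - sin (p i)) / w i)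

variable {c w p : ι → ℝ} {T : ℝ}

lemma sinusoidPrimitive_zero : sinusoidPrimitive c w p 0 = 0 := by
  ext i
  simp [sinusoidPrimitive]

lemma sinusoidPrimitive_period (hT : ∀ i, ∃ n : ℤ, w i * T = n * (2 * π)) :
    sinusoidPrimitive c w p T = 0 := by
  ext i
  obtain ⟨n, hn⟩ := hT i
  simp [sinusoidPrimitive, hn, add_comm _ (p i), sin_add_int_mul_two_pi]

@[fun_prop]
lemma continuous_sinusoid : Continuous (sinusoid c w p) := by
  unfold sinusoid
  fun_prop

@[fun_prop]
lemma continuous_sinusoidPrimitive : Continuous (sinusoidPrimitive c w p) := by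
  unfold sinusoidPrimitive
  fun_prop

variable [Fintype ι]

lemma hasDerivAt_sinusoidPrimitive (hw : ∀ i, w i ≠ 0) (t : ℝ) :
    HasDerivAt (sinusoidPrimitive c w p) (sinusoid c w p t) t := by
  have coordinate (i : ι) : HasDerivAt
      (fun s => c i * ((sin (w i * s + p i) - sin (p i)) / w i)) (c i * cos (w i * t + p i)) t := by
    have := (((hasDerivAt_mul_add (w i) (p i) t).sin.sub_const (sin (p i))).div_const
      (w i)).const_mul (c i)
    rwa [mul_div_cancel_right₀ _ (hw i)] at this
  exact (PiLp.hasFDerivAt_toLp 2 _).comp_hasDerivAt t (hasDerivAt_pi.2 coordinate)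

lemma integral_sinusoid (hw : ∀ i, w i ≠ 0) (t : ℝ) :
    ∫ s in (0 : ℝ)..t, sinusoid c w p s = sinusoidPrimitive c w p t := by
  rw [intervalIntegral.integral_eq_sub_of_hasDerivAt (fun s _ => hasDerivAt_sinusoidPrimitive hw s)
    (continuous_sinusoid.intervalIntegrable 0 t), sinusoidPrimitive_zero, sub_zero]

lemma integral_cos_smul_sinusoid [DecidableEq ι] (hw : ∀ i, w i ≠ 0)
    (hw_abs : Function.Injective fun i => |w i|)
    (hT : ∀ i, ∃ n : ℤ, w i * T = n * (2 * π)) (i : ι) :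
    ∫ t in (0 : ℝ)..T, cos (w i * t + p i) • sinusoid c w p t =
      (c i * T / 2) • EuclideanSpace.single i 1 := by
  ext j
  rw [intervalIntegral_euclidean_apply (Continuous.intervalIntegrable (by fun_prop) _ _)]
  simp only [sinusoid, PiLp.smul_apply, smul_eq_mul, PiLp.single_apply, mul_left_comm _ (c j),
    intervalIntegral.integral_const_mul]
  obtain rfl | hji := eq_or_ne j i
  · rw [integral_cos_mul_cos_self (hw j) (hT j), if_pos rfl]
    ring
  · rw [integral_cos_mul_cos_eq_zero (hw_abs.ne hji.symm) (hT i) (hT j), if_neg hji]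
    simp

lemma integral_cos_sub_cos_div_smul_sinusoid [DecidableEq ι] (hw : ∀ i, w i ≠ 0)
    (hw_abs : Function.Injective fun i => |w i|)
    (hT : ∀ i, ∃ n : ℤ, w i * T = n * (2 * π)) (i : ι) :
    ∫ t in (0 : ℝ)..T, ((cos (w i * t + p i) - cos (p i)) / w i) • sinusoid c w p t =
      (c i * T / (2 * w i)) • EuclideanSpace.single i 1 := by
  simp only [div_eq_inv_mul _ (w i), mul_smul, sub_smul, intervalIntegral.integral_smul]
  rw [intervalIntegral.integral_sub (Continuous.intervalIntegrable (by fun_prop) _ _)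
      (Continuous.intervalIntegrable (by fun_prop) _ _),
    intervalIntegral.integral_smul, integral_sinusoid hw, sinusoidPrimitive_period hT, smul_zero,
    sub_zero, integral_cos_smul_sinusoid hw hw_abs hT, smul_smul]
  congr 1
  field_simp

lemma integral_sin_mul_primitive_sub_cos_mul_sinusoid [DecidableEq ι] (hw : ∀ i, w i ≠ 0)
    (hw_abs : Function.Injective fun i => |w i|)
    (hT : ∀ i, ∃ n : ℤ, w i * T = n * (2 * π)) (i : ι) (L : EuclideanSpace ℝ ι →L[ℝ] ℝ) :
    ∫ t in (0 : ℝ)..T, (-sin (w i * t + p i) * L (sinusoidPrimitive c w p t) -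
        (cos (w i * t + p i) - cos (p i)) / w i * L (sinusoid c w p t)) =
      -(c i * T / w i) * L (EuclideanSpace.single i 1) := by
  have hderiv_cos (t : ℝ) :
      HasDerivAt (fun s => (cos (w i * s + p i) - cos (p i)) / w i) (-sin (w i * t + p i)) t := by
    have := ((hasDerivAt_mul_add (w i) (p i) t).cos.sub_const (cos (p i))).div_const (w i)
    rwa [mul_div_cancel_right₀ _ (hw i)] at this
  have hderiv_primitive (t : ℝ) :
      HasDerivAt (fun s => L (sinusoidPrimitive c w p s)) (L (sinusoid c w p t)) t :=
    L.hasFDerivAt.comp_hasDerivAt t (hasDerivAt_sinusoidPrimitive hw t)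
  rw [integral_deriv_mul_sub_mul_deriv_of_eq_zero hderiv_cos hderiv_primitive (by fun_prop)
    (L.continuous.comp continuous_sinusoid) (by rw [sinusoidPrimitive_zero, map_zero])
    (by rw [sinusoidPrimitive_period hT, map_zero])]
  simp only [← smul_eq_mul (a := (_ - _) / _), ← map_smul]
  rw [L.intervalIntegral_comp_comm (Continuous.intervalIntegrable (by fun_prop) _ _),
    integral_cos_sub_cos_div_smul_sinusoid hw hw_abs hT, map_smul, smul_eq_mul]
  field_simp

end Sinusoid

section StateDerivatives

variable {ι : Type*} [Fintype ι] {E : Type*} [NormedAddCommGroup E] [NormedSpace ℝ E]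
  {c w : ι → ℝ} {J : ι → E → ℝ} {ξ : E}

lemma fderiv_sinusoid_apply (hJ : ∀ i, DifferentiableAt ℝ (J i) ξ) (t : ℝ) (v : E) (i : ι) :
    fderiv ℝ (fun y => sinusoid c w (J · y) t) ξ v i =
      c i * (-sin (w i * t + J i ξ) * fderiv ℝ (J i) ξ v) := by
  have hdiff : DifferentiableAt ℝ (fun y => sinusoid c w (J · y) t) ξ :=
    differentiableAt_euclidean.2 fun j =>
      (((hJ j).hasFDerivAt.const_add (w j * t)).cos.const_mul (c j)).differentiableAt
  have coordinate := ((hJ i).hasFDerivAt.const_add (w i * t)).cos.const_mul (c i)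
  rw [fderiv_euclidean_apply hdiff]
  exact congrArg (· v) coordinate.fderiv

lemma fderiv_sinusoidPrimitive_apply (hJ : ∀ i, DifferentiableAt ℝ (J i) ξ) (t : ℝ) (v : E)
    (i : ι) :
    fderiv ℝ (fun y => sinusoidPrimitive c w (J · y) t) ξ v i =
      c i * ((cos (w i * t + J i ξ) - cos (J i ξ)) / w i * fderiv ℝ (J i) ξ v) := by
  have coordinate (j : ι) := ((((hJ j).hasFDerivAt.const_add (w j * t)).sin.sub
    (hJ j).hasFDerivAt.sin).mul_const (w j)⁻¹).const_mul (c j)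
  have hdiff : DifferentiableAt ℝ (fun y => sinusoidPrimitive c w (J · y) t) ξ :=
    differentiableAt_euclidean.2 fun j => (coordinate j).differentiableAt
  rw [fderiv_euclidean_apply hdiff]
  refine (congrArg (· v) (coordinate i).fderiv).trans ?_
  simp only [smul_apply, sub_apply, smul_eq_mul]
  ring

end StateDerivatives

section SecondOrderAverage

variable {ι : Type*} [Fintype ι] {c w : ι → ℝ} {J : ι → EuclideanSpace ℝ ι → ℝ}
  {ξ : EuclideanSpace ℝ ι}

lemma lieBracket_sinusoidPrimitive_sinusoid_apply (hJ : ∀ i, DifferentiableAt ℝ (J i) ξ) (t : ℝ)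
    (i : ι) :
    lieBracket ℝ (fun y => sinusoidPrimitive c w (J · y) t) (fun y => sinusoid c w (J · y) t) ξ i =
      c i * (-sin (w i * t + J i ξ) * fderiv ℝ (J i) ξ (sinusoidPrimitive c w (J · ξ) t) -
        (cos (w i * t + J i ξ) - cos (J i ξ)) / w i *
          fderiv ℝ (J i) ξ (sinusoid c w (J · ξ) t)) := by
  rw [lieBracket, PiLp.sub_apply, fderiv_sinusoid_apply hJ, fderiv_sinusoidPrimitive_apply hJ,
    mul_sub]

lemma continuous_lieBracket_sinusoidPrimitive_sinusoid (hJ : ∀ i, DifferentiableAt ℝ (J i) ξ) :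
    Continuous fun t => lieBracket ℝ (fun y => sinusoidPrimitive c w (J · y) t)
      (fun y => sinusoid c w (J · y) t) ξ := by
  have coordinate (i : ι) : Continuous fun t => lieBracket ℝ
      (fun y => sinusoidPrimitive c w (J · y) t) (fun y => sinusoid c w (J · y) t) ξ i := by
    simp only [lieBracket_sinusoidPrimitive_sinusoid_apply hJ]
    fun_prop
  exact (PiLp.continuous_toLp 2 _).comp (continuous_pi coordinate)

theorem stmt14_general [DecidableEq ι] {T : ℝ} (hT : T ≠ 0) (hw : ∀ i, w i ≠ 0)
    (hw_abs : Function.Injective fun i => |w i|)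
    (hw_per : ∀ i, ∃ n : ℤ, w i * T = n * (2 * π))
    (hJ : ∀ i, DifferentiableAt ℝ (J i) ξ) (i : ι) :
    ((1 / T) • ∫ t in (0 : ℝ)..T, (1 / 2 : ℝ) •
        lieBracket ℝ (fun y => ∫ s in (0 : ℝ)..t, sinusoid c w (J · y) s)
          (fun y => sinusoid c w (J · y) t) ξ) i =
      -(c i ^ 2 / (2 * w i)) * fderiv ℝ (J i) ξ (EuclideanSpace.single i 1) := by
  simp only [integral_sinusoid hw, intervalIntegral.integral_smul, PiLp.smul_apply, smul_eq_mul]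
  rw [intervalIntegral_euclidean_apply
    ((continuous_lieBracket_sinusoidPrimitive_sinusoid hJ).intervalIntegrable _ _)]
  simp only [lieBracket_sinusoidPrimitive_sinusoid_apply hJ, intervalIntegral.integral_const_mul]
  rw [integral_sin_mul_primitive_sub_cos_mul_sinusoid (p := (J · ξ)) hw hw_abs hw_per]
  field_simp

end SecondOrderAverage

lemma fderiv_sum_one_sub_cos_single {ι : Type*} [Fintype ι] [DecidableEq ι] (s : Finset ι) (i : ι)
    (ξ : EuclideanSpace ℝ ι) :
    fderiv ℝ (fun y : EuclideanSpace ℝ ι => ∑ j ∈ s, (1 - cos (y i - y j))) ξ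
      (EuclideanSpace.single i 1) = ∑ j ∈ s, sin (ξ i - ξ j) := by
  let proj (j : ι) : EuclideanSpace ℝ ι →L[ℝ] ℝ := EuclideanSpace.proj j
  have summand (j : ι) : HasFDerivAt (fun y : EuclideanSpace ℝ ι => 1 - cos (y i - y j))
      (-(-sin (ξ i - ξ j) • (proj i - proj j))) ξ :=
    ((proj i).hasFDerivAt.sub (proj j).hasFDerivAt).cos.const_sub 1
  rw [(HasFDerivAt.fun_sum fun j _ => summand j).fderiv, sum_apply]
  refine Finset.sum_congr rfl fun j _ => ?_
  obtain rfl | hji := eq_or_ne j i <;> simp [proj, *]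

lemma sq_mul_sqrt_two_mul_div {a w : ℝ} (ha : a = 1 ∨ a = -1) (hw : 0 < w) :
    (a * √(2 * w)) ^ 2 / (2 * w) = 1 := by
  rw [mul_pow, sq_sqrt (by positivity), sq_eq_one_iff.2 ha, one_mul, div_self (by positivity)]

/-- Second-order average of the model-free synchronization dynamics is the Kuramoto
vector field, equation (45): the `i`-th component of the `τ₂`-average of
`(1/2)[u₁, φ₁]_ξ` equals `−Σ_{j∈𝒩ᵢ} sin(ξᵢ − ξⱼ)`, independently of the unknown
control directions `αᵢ ∈ {−1, +1}`. -/
theorem stmt14 (r : ℕ) (hr : 2 ≤ r) (T₂ : ℝ) (hT₂ : 0 < T₂)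
    (w : Fin r → ℝ) (hw_pos : ∀ i, 0 < w i) (hw_inj : Function.Injective w)
    (hw_per : ∀ i, ∃ m : ℕ, 0 < m ∧ w i * T₂ = 2 * Real.pi * m)
    (α : Fin r → ℝ) (hα : ∀ i, α i = 1 ∨ α i = -1)
    (𝒩 : Fin r → Finset (Fin r)) (h𝒩 : ∀ i, i ∉ 𝒩 i)
    (Jf : Fin r → EuclideanSpace ℝ (Fin r) → ℝ)
    (hJf : ∀ i ξ, Jf i ξ = ∑ j ∈ 𝒩 i, (1 - Real.cos (ξ i - ξ j)))
    (φ₁ : EuclideanSpace ℝ (Fin r) → ℝ → EuclideanSpace ℝ (Fin r))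
    (u₁ : EuclideanSpace ℝ (Fin r) → ℝ → EuclideanSpace ℝ (Fin r))
    (hφ₁ : ∀ ξ τ₂ i, φ₁ ξ τ₂ i
      = α i * Real.sqrt (2 * w i) * Real.cos (w i * τ₂ + Jf i ξ))
    (hu₁ : ∀ ξ τ₂, u₁ ξ τ₂ = ∫ s in (0:ℝ)..τ₂, φ₁ ξ s) :
    ∀ (ξ : EuclideanSpace ℝ (Fin r)) (i : Fin r),
      ((1 / T₂) • (∫ τ₂ in (0:ℝ)..T₂,
        (1/2 : ℝ) • ((fderiv ℝ (fun y => φ₁ y τ₂) ξ) (u₁ ξ τ₂)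
          - (fderiv ℝ (fun y => u₁ y τ₂) ξ) (φ₁ ξ τ₂)))) i
      = -(∑ j ∈ 𝒩 i, Real.sin (ξ i - ξ j)) := by
  intro ξ i
  obtain rfl : Jf = fun i y => ∑ j ∈ 𝒩 i, (1 - cos (y i - y j)) := funext₂ hJf
  obtain rfl : φ₁ = fun y => sinusoid (fun i => α i * √(2 * w i)) w
      fun i => ∑ j ∈ 𝒩 i, (1 - cos (y i - y j)) := by
    ext y t k
    exact hφ₁ y t k
  obtain rfl := funext₂ hu₁
  have hw_abs : Function.Injective fun i => |w i| := by simpa only [abs_of_pos (hw_pos _)]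
  have hper (k : Fin r) : ∃ n : ℤ, w k * T₂ = n * (2 * π) := by
    obtain ⟨m, -, hm⟩ := hw_per k
    exact ⟨m, by rw [hm, Int.cast_natCast, mul_comm]⟩
  refine (stmt14_general hT₂.ne' (fun k => (hw_pos k).ne') hw_abs hper
    (fun k => by fun_prop) i).trans ?_
  rw [sq_mul_sqrt_two_mul_div (hα i) (hw_pos i), fderiv_sum_one_sub_cos_single, neg_one_mul]
end
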